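/- arXiv:2112.00064 — 2 statements merged into one kernel-verified Lean document; each statement's English description precedes it below -/
import Mathlib

section
/- Let S₁, S₂, S₃, S₄ be pairwise disjoint finite sets of points in ℝ² with S_i ⊆ Q_i for i = 1, 2, 3, 4, |S₁| = |S₃| ≥ 3 and |S₂| = |S₄| ≥ 3, and let S = S₁ ∪ S₂ ∪ S₃ ∪ S₄. Suppose there exist three pairwise disjoint quadruples P = {p₁, p₂, p₃, p₄}, Q = {q₁, q₂, q₃, q₄} and R = {r₁, r₂, r₃, r₄} with p_i, q_i, r_i ∈ S_i for i = 1, 2, 3, 4, such that each of P, Q, R is concave-obtuse and upward (i.e., the paths p₂p₄p₃p₁, q₂q₄q₃q₁ and r₂r₄r₃r₁ are acute). Then S admits an acute spanning tour. -/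
open EuclideanGeometry Real

noncomputable section

abbrev Plane := EuclideanSpace ℝ (Fin 2)

/-- The four closed quadrants of the plane. -/
def InQ1 (p : Plane) : Prop := 0 ≤ p 0 ∧ 0 ≤ p 1
def InQ2 (p : Plane) : Prop := p 0 ≤ 0 ∧ 0 ≤ p 1
def InQ3 (p : Plane) : Prop := p 0 ≤ 0 ∧ p 1 ≤ 0
def InQ4 (p : Plane) : Prop := 0 ≤ p 0 ∧ p 1 ≤ 0

/-- A quadruple is concave-obtuse: one of the points (the center) lies in the interior of the
triangle formed by the other three, and all three angles at the center formed by connecting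
the center to the other three points are greater than `π/2`. -/
def ConcaveObtuse (p₁ p₂ p₃ p₄ : Plane) : Prop :=
  ∃ c a b d : Plane, ({c, a, b, d} : Set Plane) = ({p₁, p₂, p₃, p₄} : Set Plane) ∧
    c ∈ interior (convexHull ℝ ({a, b, d} : Set Plane)) ∧
    π / 2 < EuclideanGeometry.angle a c b ∧ π / 2 < EuclideanGeometry.angle a c d ∧
    π / 2 < EuclideanGeometry.angle b c d

/-- A quadruple with `pᵢ` in the `i`-th quadrant is upward if the path `p₂p₄p₃p₁` is acute. -/
def Upward (p₁ p₂ p₃ p₄ : Plane) : Prop :=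
  EuclideanGeometry.angle p₂ p₄ p₃ ≤ π / 2 ∧ EuclideanGeometry.angle p₄ p₃ p₁ ≤ π / 2

/-!
A zigzag between opposite quadrants is always acute, so only the passage between the two pairs of
opposite quadrants needs care. Relabel the quadruples so that the lowest of the six points in the
upper half-plane belongs to `R`; after a reflection in the vertical axis it is `r₁`. Then
`p₁ p₃ p₄ p₂ r₁ r₂ (S₄ S₂)* r₄ q₂ q₄ q₃ q₁ (S₃ S₁)* r₃` is an acute tour, where the starred blocks
exhaust the remaining points: upwardness of `P` and `Q` gives the passages `p₁ p₃ p₄ p₂` and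
`q₂ q₄ q₃ q₁`, and the turns of `p₄ p₂ r₁ r₂ s` with `s ∈ S₄` are acute because `r₁` is not above
`p₂` or `r₂`.
-/

section Tours

variable {α : Type*} {R : α → α → α → Prop}

/-- Every three consecutive entries of a list are related by the ternary relation `R`; the ternary
analogue of `List.IsChain`. A polygonal path is acute when its list of vertices satisfies
`TripleChain AcuteAngle`. -/
def TripleChain (R : α → α → α → Prop) : List α → Prop
  | a :: b :: c :: l => R a b c ∧ TripleChain R (b :: c :: l)
  | _ => True

/-- `S` has a spanning tour in which every three cyclically consecutive points are related by `R`.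
A tour is encoded as an injective enumeration of `S` by `ZMod S.card`, and `HasTour AcuteAngle S`
says that `S` admits an acute spanning tour. -/
def HasTour (R : α → α → α → Prop) (S : Finset α) : Prop :=
  ∃ f : ZMod S.card → α, Function.Injective f ∧ Set.range f = ↑S ∧
    ∀ i : ZMod S.card, R (f (i - 1)) (f i) (f (i + 1))

theorem TripleChain.getElem : ∀ {l : List α}, TripleChain R l → ∀ (k : ℕ) (hk : k + 2 < l.length),
    R l[k] l[k + 1] l[k + 2]
  | _ :: _ :: _ :: _, h, 0, _ => h.1
  | _ :: _ :: _ :: _, h, k + 1, hk => h.2.getElem k (Nat.lt_of_succ_lt_succ hk)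

theorem getElem_append_pair_eq_getElem_mod (a b : α) (l : List α) (k : ℕ)
    (hk : k < (a :: b :: l ++ [a, b]).length) :
    (a :: b :: l ++ [a, b])[k] =
      (a :: b :: l)[k % (l.length + 2)]'(Nat.mod_lt _ (Nat.succ_pos _)) := by
  have hk' : k < l.length + 2 + 2 := hk.trans_eq List.length_append
  obtain h | rfl | rfl : k < l.length + 2 ∨ k = l.length + 2 ∨ k = l.length + 2 + 1 := by omega
  · simp only [Nat.mod_eq_of_lt h]
    exact List.getElem_append_left h
  · simp
  · simp

theorem hasTour_of_tripleChain {a b : α} {l : List α} {S : Finset α}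
    (hS : S.val = ↑(a :: b :: l)) (h : TripleChain R (a :: b :: l ++ [a, b])) : HasTour R S := by
  have hcard : S.card = l.length + 2 := congrArg Multiset.card hS
  have hnodup : (a :: b :: l).Nodup := Multiset.coe_nodup.1 (hS ▸ S.nodup)
  rw [HasTour, hcard]
  let f : ZMod (l.length + 2) → α := (a :: b :: l).get
  have hf (k : ℕ) (hk : k < (a :: b :: l ++ [a, b]).length) :
      (a :: b :: l ++ [a, b])[k] = f k :=
    getElem_append_pair_eq_getElem_mod a b l k hk
  refine ⟨f, List.nodup_iff_injective_get.1 hnodup, ?_, (Equiv.addRight 1).forall_congr_right.1 ?_⟩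
  · ext x
    exact (Set.ext_iff.1 (Set.range_list_get _) x).trans
      (by rw [Finset.mem_coe, ← Finset.mem_val, hS]; rfl)
  · intro j
    have hj : j.val + 2 < (a :: b :: l ++ [a, b]).length := by
      rw [List.length_append]
      exact Nat.add_lt_add_right (ZMod.val_lt j) 2
    have key := h.getElem j.val hj
    simp only [hf, Nat.cast_add, ZMod.natCast_zmod_val, Nat.cast_one, Nat.cast_ofNat] at key
    simpa [add_assoc, one_add_one_eq_two] using key

theorem TripleChain.interleave_append {U V : Set α}
    (hU : ∀ a ∈ U, ∀ b ∈ V, ∀ c ∈ U, R a b c) (hV : ∀ a ∈ V, ∀ b ∈ U, ∀ c ∈ V, R a b c)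
    {y z : α} {t : List α} (hy : y ∈ U) (hz : z ∈ V) (ht : TripleChain R (y :: z :: t)) :
    ∀ {us vs : List α} {w x : α}, us.length = vs.length → (∀ u ∈ us, u ∈ U) → (∀ v ∈ vs, v ∈ V) →
      x ∈ V → (∀ u ∈ U, R w x u) → TripleChain R (w :: x :: (us.interleave vs ++ y :: z :: t))
  | [], [], _, x, _, _, _, hx, hw => by
    simpa only [List.nil_interleave, List.nil_append] using ⟨hw y hy, hV x hx y hy z hz, ht⟩
  | u :: us, v :: vs, _, x, hlen, hus, hvs, hx, hw => by
    obtain ⟨hu, hus⟩ := List.forall_mem_cons.1 hus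
    obtain ⟨hv, hvs⟩ := List.forall_mem_cons.1 hvs
    simpa only [List.cons_interleave, List.cons_append] using
      ⟨hw u hu, hV x hx u hu v hv, interleave_append hU hV hy hz ht (Nat.succ.inj hlen) hus hvs hv
        (hU u hu v hv)⟩

theorem exists_list_val_eq_coe_append {S : Finset α} {l : List α} (hl : l.Nodup)
    (hlS : ∀ x ∈ l, x ∈ S) : ∃ L : List α, S.val = ↑(l ++ L) := by
  have hle : (l : Multiset α) ≤ S.val := (Multiset.le_iff_subset (Multiset.coe_nodup.2 hl)).2 hlS
  obtain ⟨m, hm⟩ := Multiset.le_iff_exists_add.1 hle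
  induction m using Quotient.inductionOn with
  | h L => exact ⟨L, hm⟩

theorem hasTour_of_quadruples {S : Fin 4 → Finset α} {T : Finset α}
    (hT : T.val = ∑ i, (S i).val) (hcard : ∀ i, (S i).card = (S (i + 2)).card)
    (hR : ∀ i, ∀ a ∈ S i, ∀ b ∈ S (i + 2), ∀ c ∈ S i, R a b c) {p q r : Fin 4 → α}
    (hpS : ∀ i, p i ∈ S i) (hqS : ∀ i, q i ∈ S i) (hrS : ∀ i, r i ∈ S i)
    (hpqr : ∀ i, [p i, q i, r i].Nodup)
    (hp : TripleChain R [p 0, p 2, p 3, p 1]) (hq : TripleChain R [q 1, q 3, q 2, q 0])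
    (hlink : ∀ s ∈ S 3, TripleChain R [p 3, p 1, r 0, r 1, s]) : HasTour R T := by
  have hlist (i) : ∃ L : List α, (S i).val = ↑([p i, q i, r i] ++ L) :=
    exists_list_val_eq_coe_append (hpqr i) (by simp [hpS, hqS, hrS])
  choose L hL using hlist
  have hlen (i) : (L i).length = (L (i + 2)).length := by
    simpa [← Finset.card_val, hL] using hcard i
  have hLS (i) : ∀ x ∈ L i, x ∈ S i := fun x hx => by
    rw [← Finset.mem_val, hL]; exact List.mem_append_right _ hx
  refine hasTour_of_tripleChain (a := p 0) (b := p 2) (l := p 3 :: p 1 :: r 0 :: r 1 ::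
    ((L 3).interleave (L 1) ++ r 3 :: q 1 :: q 3 :: q 2 :: q 0 ::
      ((L 2).interleave (L 0) ++ [r 2]))) ?_ ?_
  · have hinterleave (us vs : List α) : (us.interleave vs : Multiset α) = us + vs :=
      Multiset.coe_eq_coe.2 List.interleave_perm_append
    simp only [hT, Fin.sum_univ_four, hL, List.cons_append, List.nil_append, ← Multiset.cons_coe,
      ← Multiset.coe_add, hinterleave, ← Multiset.singleton_add, Multiset.coe_nil]
    abel
  · obtain ⟨hpr, hprr, -⟩ := hlink (r 3) (hrS 3)
    obtain ⟨hp₂, hp₃, -⟩ := hp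
    obtain ⟨hq₃, hq₂, -⟩ := hq
    have hend : TripleChain R [r 2, p 0, p 2] := ⟨hR 2 _ (hrS 2) _ (hpS 0) _ (hpS 2), trivial⟩
    have h₃₁ : TripleChain R (q 2 :: q 0 :: ((L 2).interleave (L 0) ++ [r 2, p 0, p 2])) :=
      .interleave_append (hR 2) (hR 0) (hrS 2) (hpS 0) hend (hlen 2) (hLS 2) (hLS 0) (hqS 0)
        (hR 2 _ (hqS 2) _ (hqS 0))
    have hmid : TripleChain R (r 3 :: q 1 :: q 3 :: q 2 :: q 0 ::
        ((L 2).interleave (L 0) ++ [r 2, p 0, p 2])) :=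
      ⟨hR 3 _ (hrS 3) _ (hqS 1) _ (hqS 3), hq₃, hq₂, h₃₁⟩
    have h₄₂ := TripleChain.interleave_append (hR 3) (hR 1) (hrS 3) (hqS 1) hmid (hlen 3) (hLS 3)
      (hLS 1) (hrS 1) fun s hs => (hlink s hs).2.2.1
    simpa only [List.cons_append, List.append_assoc, List.nil_append] using
      ⟨hp₂, hp₃, hpr, hprr, h₄₂⟩

theorem val_eq_sum_val_of_coe_eq_iUnion {ι : Type*} [Fintype ι] {S : ι → Finset α} {T : Finset α}
    (hdisj : Pairwise (Function.onFun Disjoint S)) (hT : (T : Set α) = ⋃ i, ↑(S i)) :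
    T.val = ∑ i, (S i).val := by
  have hdisj' : (↑(Finset.univ : Finset ι) : Set ι).PairwiseDisjoint S := hdisj.set_pairwise _
  obtain rfl : T = Finset.univ.disjiUnion S hdisj' := by
    simpa [← Finset.coe_inj] using hT
  rfl

end Tours

section Geometry

variable {V P : Type*} [NormedAddCommGroup V] [InnerProductSpace ℝ V] [MetricSpace P]
  [NormedAddTorsor V P]

/-- The angle at `b` between the segments `ba` and `bc` is at most `π / 2`; right angles are
allowed, as in the definition of acute paths and tours. -/
def AcuteAngle (a b c : P) : Prop := ∠ a b c ≤ π / 2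

theorem AcuteAngle.symm {a b c : P} (h : AcuteAngle a b c) : AcuteAngle c b a := by
  rwa [AcuteAngle, EuclideanGeometry.angle_comm]

theorem acuteAngle_of_inner_nonneg {a b c : P} (h : 0 ≤ inner ℝ (a -ᵥ b) (c -ᵥ b)) :
    AcuteAngle a b c :=
  Real.arccos_le_pi_div_two.2 (by positivity)

/-- The closed quadrants as a family indexed from `0`, so that `InQuadrant i` is the quadrant
`Q_{i+1}`, `i + 2` is the index of the opposite quadrant and `1 - i` that of the mirror image in
the vertical axis. -/
def InQuadrant : Fin 4 → Plane → Prop := ![InQ1, InQ2, InQ3, InQ4]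

variable {i : Fin 4} {x y : Plane}

theorem InQuadrant.inner_nonneg (hx : InQuadrant i x) (hy : InQuadrant i y) : 0 ≤ inner ℝ x y := by
  rw [PiLp.inner_apply, Fin.sum_univ_two]
  fin_cases i <;> obtain ⟨hx₀, hx₁⟩ := hx <;> obtain ⟨hy₀, hy₁⟩ := hy
  · exact add_nonneg (mul_nonneg hy₀ hx₀) (mul_nonneg hy₁ hx₁)
  · exact add_nonneg (mul_nonneg_of_nonpos_of_nonpos hy₀ hx₀) (mul_nonneg hy₁ hx₁)
  · exact add_nonneg (mul_nonneg_of_nonpos_of_nonpos hy₀ hx₀)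
      (mul_nonneg_of_nonpos_of_nonpos hy₁ hx₁)
  · exact add_nonneg (mul_nonneg hy₀ hx₀) (mul_nonneg_of_nonpos_of_nonpos hy₁ hx₁)

theorem InQuadrant.sub (hx : InQuadrant i x) (hy : InQuadrant (i + 2) y) :
    InQuadrant i (x - y) := by
  fin_cases i <;> obtain ⟨hx₀, hx₁⟩ := hx <;> obtain ⟨hy₀, hy₁⟩ := hy
  · exact ⟨sub_nonneg.2 (hy₀.trans hx₀), sub_nonneg.2 (hy₁.trans hx₁)⟩
  · exact ⟨sub_nonpos.2 (hx₀.trans hy₀), sub_nonneg.2 (hy₁.trans hx₁)⟩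
  · exact ⟨sub_nonpos.2 (hx₀.trans hy₀), sub_nonpos.2 (hx₁.trans hy₁)⟩
  · exact ⟨sub_nonneg.2 (hy₀.trans hx₀), sub_nonpos.2 (hx₁.trans hy₁)⟩

theorem InQuadrant.sub_of_le (hi : i = 0 ∨ i = 1) (hx : InQuadrant i x)
    (hy : InQuadrant (1 - i) y) (h : x 1 ≤ y 1) : InQuadrant (1 - i) (y - x) := by
  obtain rfl | rfl := hi
  · exact ⟨sub_nonpos.2 (hy.1.trans hx.1), sub_nonneg.2 h⟩
  · exact ⟨sub_nonneg.2 (hx.1.trans hy.1), sub_nonneg.2 h⟩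

theorem InQuadrant.sub_swap (h : InQuadrant i (x - y)) : InQuadrant (i + 2) (y - x) := by
  fin_cases i <;> exact h.imp (by simp) (by simp)

theorem acuteAngle_of_inQuadrant_sub {a b c : Plane} (ha : InQuadrant i (a - b))
    (hc : InQuadrant i (c - b)) : AcuteAngle a b c :=
  acuteAngle_of_inner_nonneg (ha.inner_nonneg hc)

theorem tripleChain_acuteAngle_of_le {a b x y s : Plane} (hi : i = 0 ∨ i = 1)
    (ha : InQuadrant (1 - i + 2) a) (hb : InQuadrant (1 - i) b) (hx : InQuadrant i x)
    (hy : InQuadrant (1 - i) y) (hs : InQuadrant (1 - i + 2) s) (hxb : x 1 ≤ b 1)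
    (hxy : x 1 ≤ y 1) : TripleChain AcuteAngle [a, b, x, y, s] := by
  have hbx : InQuadrant (1 - i) (b - x) := hx.sub_of_le hi hb hxb
  have hyx : InQuadrant (1 - i) (y - x) := hx.sub_of_le hi hy hxy
  exact ⟨acuteAngle_of_inQuadrant_sub (hb.sub ha).sub_swap hbx.sub_swap,
    acuteAngle_of_inQuadrant_sub hbx hyx,
    acuteAngle_of_inQuadrant_sub hyx.sub_swap (hy.sub hs).sub_swap, trivial⟩

theorem Upward.tripleChain {p₁ p₂ p₃ p₄ : Plane} (h : Upward p₁ p₂ p₃ p₄) :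
    TripleChain AcuteAngle [p₂, p₄, p₃, p₁] :=
  ⟨h.1, h.2, trivial⟩

theorem Upward.tripleChain_reverse {p₁ p₂ p₃ p₄ : Plane} (h : Upward p₁ p₂ p₃ p₄) :
    TripleChain AcuteAngle [p₁, p₃, p₄, p₂] :=
  ⟨AcuteAngle.symm h.2, AcuteAngle.symm h.1, trivial⟩

variable {S : Fin 4 → Finset Plane} {T : Finset Plane}

theorem hasTour_of_upward_of_le (hT : T.val = ∑ i, (S i).val)
    (hcard : ∀ i, (S i).card = (S (i + 2)).card) (hS : ∀ i, ∀ a ∈ S i, InQuadrant i a)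
    {p q r : Fin 4 → Plane} (hpS : ∀ i, p i ∈ S i) (hqS : ∀ i, q i ∈ S i) (hrS : ∀ i, r i ∈ S i)
    (hpqr : ∀ i, [p i, q i, r i].Nodup) (hp : Upward (p 0) (p 1) (p 2) (p 3))
    (hq : Upward (q 0) (q 1) (q 2) (q 3)) (hi : i = 0 ∨ i = 1) (hrp : r i 1 ≤ p (1 - i) 1)
    (hrr : r i 1 ≤ r (1 - i) 1) : HasTour AcuteAngle T := by
  have hR (i) (a) (ha : a ∈ S i) (b) (hb : b ∈ S (i + 2)) (c) (hc : c ∈ S i) : AcuteAngle a b c :=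
    acuteAngle_of_inQuadrant_sub ((hS i a ha).sub (hS _ b hb)) ((hS i c hc).sub (hS _ b hb))
  have hlink (s) (hs : s ∈ S (1 - i + 2)) :
      TripleChain AcuteAngle [p (1 - i + 2), p (1 - i), r i, r (1 - i), s] :=
    tripleChain_acuteAngle_of_le hi (hS _ _ (hpS _)) (hS _ _ (hpS _)) (hS _ _ (hrS _))
      (hS _ _ (hrS _)) (hS _ _ hs) hrp hrr
  obtain rfl | rfl := hi
  · exact hasTour_of_quadruples hT hcard hR hpS hqS hrS hpqr hp.tripleChain_reverse hq.tripleChain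
      hlink
  · have hreflect (i : Fin 4) : 1 - (i + 2) = 1 - i + 2 := by decide +revert
    exact hasTour_of_quadruples (S := fun i => S (1 - i))
      (hT.trans (Equiv.sum_comp (Equiv.subLeft 1) fun i => (S i).val).symm)
      (fun i => hreflect i ▸ hcard (1 - i)) (fun i => hreflect i ▸ hR (1 - i))
      (fun i => hpS (1 - i)) (fun i => hqS (1 - i)) (fun i => hrS (1 - i)) (fun i => hpqr (1 - i))
      hp.tripleChain hq.tripleChain_reverse hlink

theorem hasTour_of_three_upward (hT : T.val = ∑ i, (S i).val)
    (hcard : ∀ i, (S i).card = (S (i + 2)).card) (hS : ∀ i, ∀ a ∈ S i, InQuadrant i a)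
    {Q : Fin 3 → Fin 4 → Plane} (hQS : ∀ k i, Q k i ∈ S i)
    (hQ : Pairwise (Function.onFun Disjoint fun k => Set.range (Q k)))
    (hup : ∀ k, Upward (Q k 0) (Q k 1) (Q k 2) (Q k 3)) : HasTour AcuteAngle T := by
  obtain ⟨⟨k, i⟩, hi, hmin⟩ := (Finset.univ ×ˢ {0, 1} : Finset (Fin 3 × Fin 4)).exists_min_image
    (fun x => Q x.1 x.2 1) ⟨(0, 0), by decide⟩
  replace hi : i = 0 ∨ i = 1 := by simpa using hi
  have hle (l : Fin 3) : Q k i 1 ≤ Q l (1 - i) 1 :=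
    hmin (l, 1 - i) (by obtain rfl | rfl := hi <;> simp)
  have hinj (i : Fin 4) : Function.Injective (Q · i) := fun k l hkl => by
    by_contra hne
    exact Set.disjoint_left.1 (hQ hne) ⟨i, rfl⟩ ⟨i, hkl.symm⟩
  have hnodup : ∀ k : Fin 3, [k + 1, k + 2, k].Nodup := by decide
  exact hasTour_of_upward_of_le hT hcard hS (hQS (k + 1)) (hQS (k + 2)) (hQS k)
    (fun i => (hnodup k).map (hinj i)) (hup (k + 1)) (hup (k + 2)) hi (hle (k + 1)) (hle k)

end Geometry

theorem acute_tour_of_three_concaveObtuse_upward_general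
    (S₁ S₂ S₃ S₄ S : Finset Plane)
    (hQ1 : ∀ p ∈ S₁, InQ1 p) (hQ2 : ∀ p ∈ S₂, InQ2 p)
    (hQ3 : ∀ p ∈ S₃, InQ3 p) (hQ4 : ∀ p ∈ S₄, InQ4 p)
    (hd12 : Disjoint S₁ S₂) (hd13 : Disjoint S₁ S₃) (hd14 : Disjoint S₁ S₄)
    (hd23 : Disjoint S₂ S₃) (hd24 : Disjoint S₂ S₄) (hd34 : Disjoint S₃ S₄)
    (hc13 : S₁.card = S₃.card) (hc24 : S₂.card = S₄.card)
    (hS : (↑S : Set Plane) = ↑S₁ ∪ ↑S₂ ∪ ↑S₃ ∪ ↑S₄)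
    (p₁ p₂ p₃ p₄ q₁ q₂ q₃ q₄ r₁ r₂ r₃ r₄ : Plane)
    (hp₁ : p₁ ∈ S₁) (hp₂ : p₂ ∈ S₂) (hp₃ : p₃ ∈ S₃) (hp₄ : p₄ ∈ S₄)
    (hq₁ : q₁ ∈ S₁) (hq₂ : q₂ ∈ S₂) (hq₃ : q₃ ∈ S₃) (hq₄ : q₄ ∈ S₄)
    (hr₁ : r₁ ∈ S₁) (hr₂ : r₂ ∈ S₂) (hr₃ : r₃ ∈ S₃) (hr₄ : r₄ ∈ S₄)
    (hPQ : ({p₁, p₂, p₃, p₄} : Set Plane) ∩ ({q₁, q₂, q₃, q₄} : Set Plane) = ∅)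
    (hPR : ({p₁, p₂, p₃, p₄} : Set Plane) ∩ ({r₁, r₂, r₃, r₄} : Set Plane) = ∅)
    (hQR : ({q₁, q₂, q₃, q₄} : Set Plane) ∩ ({r₁, r₂, r₃, r₄} : Set Plane) = ∅)
    (hPup : Upward p₁ p₂ p₃ p₄) (hQup : Upward q₁ q₂ q₃ q₄) (hRup : Upward r₁ r₂ r₃ r₄) :
    HasTour AcuteAngle S := by
  refine hasTour_of_three_upward (S := ![S₁, S₂, S₃, S₄])
    (Q := ![![p₁, p₂, p₃, p₄], ![q₁, q₂, q₃, q₄], ![r₁, r₂, r₃, r₄]])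
    (val_eq_sum_val_of_coe_eq_iUnion ?_ ?_) ?_ ?_ ?_ ?_ ?_
  · intro i j hij
    fin_cases i <;> fin_cases j <;> simp_all [Function.onFun, disjoint_comm]
  · ext x
    simp [hS, Fin.exists_fin_succ, or_assoc]
  · simp [Fin.forall_fin_succ, hc13, hc24]
  · simpa [Fin.forall_fin_succ, InQuadrant] using ⟨hQ1, hQ2, hQ3, hQ4⟩
  · simp [Fin.forall_fin_succ, *]
  · intro k l hkl
    simp only [← Set.disjoint_iff_inter_eq_empty] at hPQ hPR hQR
    fin_cases k <;> fin_cases l <;> simp_all [Function.onFun, Matrix.range_cons, disjoint_comm]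
  · simp [Fin.forall_fin_succ, *]

/-- **Case 2 of the construction.** If `S = S₁ ∪ S₂ ∪ S₃ ∪ S₄` with `Sᵢ` in the `i`-th closed
quadrant, `|S₁| = |S₃| ≥ 3`, `|S₂| = |S₄| ≥ 3`, and there are three pairwise disjoint
quadruples `P`, `Q`, `R` picking one point from each `Sᵢ`, each concave-obtuse and upward,
then `S` admits an acute spanning tour. -/
theorem acute_tour_of_three_concaveObtuse_upward
    (S₁ S₂ S₃ S₄ S : Finset Plane)
    (hQ1 : ∀ p ∈ S₁, InQ1 p) (hQ2 : ∀ p ∈ S₂, InQ2 p)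
    (hQ3 : ∀ p ∈ S₃, InQ3 p) (hQ4 : ∀ p ∈ S₄, InQ4 p)
    (hd12 : Disjoint S₁ S₂) (hd13 : Disjoint S₁ S₃) (hd14 : Disjoint S₁ S₄)
    (hd23 : Disjoint S₂ S₃) (hd24 : Disjoint S₂ S₄) (hd34 : Disjoint S₃ S₄)
    (hc13 : S₁.card = S₃.card) (hc24 : S₂.card = S₄.card)
    (h1 : 3 ≤ S₁.card) (h2 : 3 ≤ S₂.card)
    (hS : (↑S : Set Plane) = ↑S₁ ∪ ↑S₂ ∪ ↑S₃ ∪ ↑S₄)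
    (p₁ p₂ p₃ p₄ q₁ q₂ q₃ q₄ r₁ r₂ r₃ r₄ : Plane)
    (hp₁ : p₁ ∈ S₁) (hp₂ : p₂ ∈ S₂) (hp₃ : p₃ ∈ S₃) (hp₄ : p₄ ∈ S₄)
    (hq₁ : q₁ ∈ S₁) (hq₂ : q₂ ∈ S₂) (hq₃ : q₃ ∈ S₃) (hq₄ : q₄ ∈ S₄)
    (hr₁ : r₁ ∈ S₁) (hr₂ : r₂ ∈ S₂) (hr₃ : r₃ ∈ S₃) (hr₄ : r₄ ∈ S₄)
    (hPQ : ({p₁, p₂, p₃, p₄} : Set Plane) ∩ ({q₁, q₂, q₃, q₄} : Set Plane) = ∅)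
    (hPR : ({p₁, p₂, p₃, p₄} : Set Plane) ∩ ({r₁, r₂, r₃, r₄} : Set Plane) = ∅)
    (hQR : ({q₁, q₂, q₃, q₄} : Set Plane) ∩ ({r₁, r₂, r₃, r₄} : Set Plane) = ∅)
    (hPco : ConcaveObtuse p₁ p₂ p₃ p₄) (hQco : ConcaveObtuse q₁ q₂ q₃ q₄)
    (hRco : ConcaveObtuse r₁ r₂ r₃ r₄)
    (hPup : Upward p₁ p₂ p₃ p₄) (hQup : Upward q₁ q₂ q₃ q₄) (hRup : Upward r₁ r₂ r₃ r₄) :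
    ∃ f : ZMod S.card → Plane,
      Function.Injective f ∧ Set.range f = ↑S ∧
      ∀ i : ZMod S.card,
        EuclideanGeometry.angle (f (i - 1)) (f i) (f (i + 1)) ≤ π / 2 :=
  acute_tour_of_three_concaveObtuse_upward_general S₁ S₂ S₃ S₄ S hQ1 hQ2 hQ3 hQ4 hd12 hd13 hd14
    hd23 hd24 hd34 hc13 hc24 hS p₁ p₂ p₃ p₄ q₁ q₂ q₃ q₄ r₁ r₂ r₃ r₄ hp₁ hp₂ hp₃ hp₄ hq₁ hq₂ hq₃ hq₄
    hr₁ hr₂ hr₃ hr₄ hPQ hPR hQR hPup hQup hRup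
end
end

section
/- Let P = {p₁, p₂, p₃, p₄} and Q = {q₁, q₂, q₃, q₄} be disjoint quadruples with p_i, q_i in the closed quadrant Q_i for i = 1, 2, 3, 4. Suppose p₂ lies in the interior of the triangle p₁p₃p₄ (i.e., p₂ is the center of P), q₂ lies in the interior of the triangle q₁q₃q₄ (i.e., q₂ is the center of Q), the path q₂q₄q₃q₁ is acute (Q is upward), and the y-coordinate of p₂ is at most the y-coordinate of q₂. Then the path p₁p₂q₁q₃q₄ is acute. -/
open EuclideanGeometry Real

noncomputable section

/-!
An angle of a path is acute as soon as its vertex is coordinatewise extreme among the three points.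
In a triangle with one vertex in the upper half-plane and two in the lower, that first vertex is the
highest point, so `p₂` is no higher than `p₁`, and `q₂`, hence `p₂`, is no higher than `q₁`. Thus
`p₂` is lower left of `p₁` and `q₁`, while `q₁` is upper right of `p₂` and `q₃`; the angle at `q₃`
is the last angle of the upward path of `Q`, traversed backwards.
-/

/-- This includes zero vectors, whose angle with any vector is `π / 2` by convention. -/
theorem vector_angle_le_pi_div_two_of_inner_nonneg {V : Type*} [NormedAddCommGroup V]
    [InnerProductSpace ℝ V] {v w : V} (h : 0 ≤ inner ℝ v w) :
    InnerProductGeometry.angle v w ≤ π / 2 :=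
  arccos_le_pi_div_two.2 (by positivity)

section Coordinates

variable {ι : Type*}

theorem apply_le_of_mem_convexHull_insert {s : Set (EuclideanSpace ℝ ι)}
    {a b : EuclideanSpace ℝ ι} {i : ι} (hs : ∀ x ∈ s, x i ≤ a i)
    (hb : b ∈ convexHull ℝ (insert a s)) : b i ≤ a i := by
  let halfSpace : Set (EuclideanSpace ℝ ι) := {x | x i ≤ a i}
  have halfSpace_convex : Convex ℝ halfSpace :=
    convex_halfSpace_le ⟨fun _ _ => rfl, fun _ _ => rfl⟩ (a i)
  have insert_subset_halfSpace : insert a s ⊆ halfSpace :=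
    Set.insert_subset (le_refl (a i)) hs
  exact convexHull_min insert_subset_halfSpace halfSpace_convex hb

variable [Fintype ι] {a b c : EuclideanSpace ℝ ι}

theorem angle_le_pi_div_two_of_forall_mul_nonneg
    (h : ∀ i, 0 ≤ (a i - b i) * (c i - b i)) : ∠ a b c ≤ π / 2 :=
  vector_angle_le_pi_div_two_of_inner_nonneg <|
    Finset.sum_nonneg fun i _ => (h i).trans_eq (mul_comm _ _)

theorem angle_le_pi_div_two_of_forall_vertex_le
    (ha : ∀ i, b i ≤ a i) (hc : ∀ i, b i ≤ c i) : ∠ a b c ≤ π / 2 :=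
  angle_le_pi_div_two_of_forall_mul_nonneg fun i =>
    mul_nonneg (sub_nonneg.2 (ha i)) (sub_nonneg.2 (hc i))

theorem angle_le_pi_div_two_of_forall_le_vertex
    (ha : ∀ i, a i ≤ b i) (hc : ∀ i, c i ≤ b i) : ∠ a b c ≤ π / 2 :=
  angle_le_pi_div_two_of_forall_mul_nonneg fun i =>
    mul_nonneg_of_nonpos_of_nonpos (sub_nonpos.2 (ha i)) (sub_nonpos.2 (hc i))

end Coordinates

theorem apply_one_le_of_mem_triangle {a b c d : Plane} (ha : 0 ≤ a 1) (hc : c 1 ≤ 0)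
    (hd : d 1 ≤ 0) (hb : b ∈ convexHull ℝ {a, c, d}) : b 1 ≤ a 1 := by
  refine apply_le_of_mem_convexHull_insert ?_ hb
  rintro x (rfl | rfl)
  exacts [hc.trans ha, hd.trans ha]

theorem acute_path_p1_p2_q1_q3_q4_general {p₁ p₂ p₃ p₄ q₁ q₂ q₃ q₄ : Plane}
    (hp₁ : InQ1 p₁) (hp₂ : p₂ 0 ≤ 0) (hp₃ : p₃ 1 ≤ 0) (hp₄ : p₄ 1 ≤ 0)
    (hq₁ : InQ1 q₁) (hq₃ : InQ3 q₃) (hq₄ : q₄ 1 ≤ 0)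
    (hpc : p₂ ∈ convexHull ℝ {p₁, p₃, p₄}) (hqc : q₂ ∈ convexHull ℝ {q₁, q₃, q₄})
    (hQ : ∠ q₄ q₃ q₁ ≤ π / 2) (hbelow : p₂ 1 ≤ q₂ 1) :
    ∠ p₁ p₂ q₁ ≤ π / 2 ∧ ∠ p₂ q₁ q₃ ≤ π / 2 ∧ ∠ q₁ q₃ q₄ ≤ π / 2 := by
  have p₂_le_p₁ : ∀ i, p₂ i ≤ p₁ i := Fin.forall_fin_two.2
    ⟨hp₂.trans hp₁.1, apply_one_le_of_mem_triangle hp₁.2 hp₃ hp₄ hpc⟩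
  have p₂_le_q₁ : ∀ i, p₂ i ≤ q₁ i := Fin.forall_fin_two.2
    ⟨hp₂.trans hq₁.1, hbelow.trans (apply_one_le_of_mem_triangle hq₁.2 hq₃.2 hq₄ hqc)⟩
  have q₃_le_q₁ : ∀ i, q₃ i ≤ q₁ i := Fin.forall_fin_two.2
    ⟨hq₃.1.trans hq₁.1, hq₃.2.trans hq₁.2⟩
  exact ⟨angle_le_pi_div_two_of_forall_vertex_le p₂_le_p₁ p₂_le_q₁,
    angle_le_pi_div_two_of_forall_le_vertex p₂_le_q₁ q₃_le_q₁,
    EuclideanGeometry.angle_comm q₄ q₃ q₁ ▸ hQ⟩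

/-- Let `P = {p₁,p₂,p₃,p₄}` and `Q = {q₁,q₂,q₃,q₄}` be disjoint quadruples with `pᵢ, qᵢ` in
the `i`-th closed quadrant, where `p₂` is the center of `P`, `q₂` is the center of `Q`,
`Q` is upward (the path `q₂q₄q₃q₁` is acute), and `p₂` is below `q₂`. Then the path
`p₁p₂q₁q₃q₄` is acute. -/
theorem acute_path_p1_p2_q1_q3_q4
    (p₁ p₂ p₃ p₄ q₁ q₂ q₃ q₄ : Plane)
    (hpne : p₁ ≠ p₂ ∧ p₁ ≠ p₃ ∧ p₁ ≠ p₄ ∧ p₂ ≠ p₃ ∧ p₂ ≠ p₄ ∧ p₃ ≠ p₄)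
    (hqne : q₁ ≠ q₂ ∧ q₁ ≠ q₃ ∧ q₁ ≠ q₄ ∧ q₂ ≠ q₃ ∧ q₂ ≠ q₄ ∧ q₃ ≠ q₄)
    (hPQ : ({p₁, p₂, p₃, p₄} : Set Plane) ∩ ({q₁, q₂, q₃, q₄} : Set Plane) = ∅)
    (hp₁ : InQ1 p₁) (hp₂ : InQ2 p₂) (hp₃ : InQ3 p₃) (hp₄ : InQ4 p₄)
    (hq₁ : InQ1 q₁) (hq₂ : InQ2 q₂) (hq₃ : InQ3 q₃) (hq₄ : InQ4 q₄)
    (hpc : p₂ ∈ interior (convexHull ℝ ({p₁, p₃, p₄} : Set Plane)))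
    (hqc : q₂ ∈ interior (convexHull ℝ ({q₁, q₃, q₄} : Set Plane)))
    (hQup : EuclideanGeometry.angle q₂ q₄ q₃ ≤ π / 2 ∧
            EuclideanGeometry.angle q₄ q₃ q₁ ≤ π / 2)
    (hbelow : p₂ 1 ≤ q₂ 1) :
    EuclideanGeometry.angle p₁ p₂ q₁ ≤ π / 2 ∧
    EuclideanGeometry.angle p₂ q₁ q₃ ≤ π / 2 ∧
    EuclideanGeometry.angle q₁ q₃ q₄ ≤ π / 2 := by
  exact acute_path_p1_p2_q1_q3_q4_general hp₁ hp₂.1 hp₃.2 hp₄.2 hq₁ hq₃ hq₄.2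
    (interior_subset hpc) (interior_subset hqc) hQup.2 hbelow
end
end
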